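/- Let (R,m) be a non-Gorenstein Noetherian local ring with m³ = (0), m² ≠ (0), residue field k, and type r. If R possesses a nonfree finitely generated module of G-dimension zero, then the Bass numbers of R satisfy μ⁰ = r, and μⁱ = r^{i+1} − r^{i−1} for all i ≥ 1; equivalently the Bass series of R is (r−t)/(1−rt). -/

import Mathlib

open CategoryTheory

noncomputable abbrev ExtGrp (R : Type) [CommRing R] (M N : Type) [AddCommGroup M] [Module R M]
    [AddCommGroup N] [Module R N] (i : ℕ) : Type :=
  ((Ext R (ModuleCat R) i).obj (Opposite.op (ModuleCat.of R M))).obj (ModuleCat.of R N)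

/-- G-dimension zero. -/
def GDimZero (R : Type) [CommRing R] (M : Type) [AddCommGroup M] [Module R M] : Prop :=
  Function.Bijective (Module.Dual.eval R M) ∧
  (∀ i : ℕ, 0 < i → Subsingleton (ExtGrp R M R i)) ∧
  (∀ i : ℕ, 0 < i → Subsingleton (ExtGrp R (Module.Dual R M) R i))

/-- finite self-injective dimension -/
def HasFiniteSelfInjDim (R : Type) [CommRing R] : Prop :=
  ∃ n : ℕ, ∀ (N : ModuleCat R) (i : ℕ), n < i →
    Subsingleton (((Ext R (ModuleCat R) i).obj (Opposite.op N)).obj (ModuleCat.of R R))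

/-- Gorenstein local ring -/
def IsGorensteinLocalRing (R : Type) [CommRing R] : Prop :=
  IsNoetherianRing R ∧ IsLocalRing R ∧ HasFiniteSelfInjDim R

/-- length of a module, as Krull dimension of its submodule lattice -/
noncomputable def mlength (R : Type) [CommRing R] (M : Type) [AddCommGroup M] [Module R M] :
    WithBot ℕ∞ :=
  Order.krullDim (Submodule R M)

/-- An indecomposable (nonzero) module: it is not a direct sum of two proper submodules. -/
def IsIndecomposableModule (R : Type) [CommRing R] (M : Type) [AddCommGroup M]
    [Module R M] : Prop :=
  (⊥ : Submodule R M) ≠ ⊤ ∧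
    ∀ N₁ N₂ : Submodule R M, IsCompl N₁ N₂ → N₁ = ⊥ ∨ N₂ = ⊥

/-- the type of a local ring: length of Hom(k, R) -/
noncomputable def typeLen (R : Type) [CommRing R] [IsLocalRing R] : WithBot ℕ∞ :=
  mlength R ((R ⧸ IsLocalRing.maximalIdeal R) →ₗ[R] R)

/-!
Splitting off free summands, we may assume that the socle of `R` annihilates a module `N` of
G-dimension zero. As `m ^ 3 = 0`, this gives `m N ⊆ soc N`, and equality holds: otherwise `k` is a
direct summand of `N`, so that `Ext¹(k, R) = 0` and `R` is self-injective. Since `N` is the dual of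
`N*`, its socle is `Hom(N* / m N*, R)`, and therefore `ℓ(m N) = r ℓ(N* / m N*)`; the same holds with
`N` and `N*` exchanged.

The sequence `0 → m N → N → N / m N → 0` has `k`-vector spaces at both ends, so dimension shifting
gives `ℓ(N / m N) μⁱ⁺¹ = ℓ(m N) μⁱ` for `i > 0`. Comparing these relations for `N` and for `N*`
shows that `N` and `N*` need equally many generators, whence `μⁱ⁺¹ = r μⁱ`, and counting lengths in
the first four terms of the long exact sequence gives `μ¹ = r² - 1`.
-/

universe u v w

section ExtComparison

variable {R : Type*} [CommRing R]

lemma nonempty_homology_linearEquiv (S : ShortComplex (ModuleCat.{v} R)) {E : Type*}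
    [AddCommGroup E] [Module R E] (Φ : LinearMap.ker S.g.hom →ₗ[R] E)
    (hΦ : Function.Surjective Φ) (hker : LinearMap.ker Φ = LinearMap.range S.moduleCatToCycles) :
    Nonempty (S.homology ≃ₗ[R] E) :=
  ⟨S.moduleCatHomologyIso.toLinearEquiv ≪≫ₗ Submodule.quotEquivOfEq _ _ hker.symm ≪≫ₗ
    Φ.quotKerEquivOfSurjective hΦ⟩

variable {C : Type*} [Category.{v} C] [Abelian C] [HasExt.{w} C] {X Y : C}

lemma extMk_zero_eq_zero_iff (P : ProjectiveResolution X)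
    (f : P.complex.X 0 ⟶ Y) (m : ℕ) (hm : 0 + 1 = m) (hf : P.complex.d m 0 ≫ f = 0) :
    P.extMk f m hm hf = 0 ↔ f = 0 := by
  subst hm
  refine ⟨fun h => ?_, fun h => by subst h; exact P.extMk_zero _ rfl⟩
  rw [← P.extEquivCohomologyClass.apply_eq_iff_eq,
    ProjectiveResolution.extEquivCohomologyClass_extMk,
    ProjectiveResolution.extEquivCohomologyClass_zero,
    CochainComplex.HomComplex.CohomologyClass.mk_eq_zero_iff,
    CochainComplex.HomComplex.Cocycle.toSingleMk_mem_coboundaries_iff _ _ _ _ _ 1 (by simp)] at h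
  obtain ⟨g, hg⟩ := h
  have hd : P.cochainComplex.d (-(0 : ℕ)) 1 = 0 :=
    (P.cochainComplex.isZero_of_isStrictlyLE 0 1 (by simp)).eq_of_tgt _ _
  rw [hd, Limits.zero_comp] at hg
  rw [← cancel_epi (P.cochainComplexXIso (-(0 : ℕ)) 0 rfl).hom, ← hg, Limits.comp_zero]

variable [Linear R C]

lemma smul_extMk (P : ProjectiveResolution X) {n : ℕ}
    (f : P.complex.X n ⟶ Y) (m : ℕ) (hm : n + 1 = m) (hf : P.complex.d m n ≫ f = 0) (r : R) :
    r • P.extMk f m hm hf = P.extMk (r • f) m hm (by simp [hf]) := by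
  rw [Abelian.Ext.smul_eq_comp_mk₀, ProjectiveResolution.extMk_comp_mk₀]
  congr 1
  simp

lemma extMk_eq_zero_iff_mem_range (P : ProjectiveResolution X) {n : ℕ}
    (f : P.complex.X n ⟶ Y) (m : ℕ) (hm : n + 1 = m) (hf : P.complex.d m n ≫ f = 0) :
    P.extMk f m hm hf = 0 ↔
      f ∈ LinearMap.range ((P.complex.linearYonedaObj R Y).sc n).f.hom := by
  cases n with
  | zero =>
    have hzero : ((P.complex.linearYonedaObj R Y).sc 0).f = 0 :=
      (P.complex.linearYonedaObj R Y).shape _ _ (by simp)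
    rw [extMk_zero_eq_zero_iff, hzero]
    exact ⟨fun h => ⟨0, h.symm⟩, fun ⟨_, h⟩ => h.symm⟩
  | succ n =>
    exact P.extMk_eq_zero_iff f m hm hf ((ComplexShape.up ℕ).prev (n + 1)) (by simp)

theorem nonempty_ext_linearEquiv [EnoughProjectives C] (X Y : C) (n : ℕ) :
    Nonempty (((Ext R C n).obj (Opposite.op X)).obj Y ≃ₗ[R] Abelian.Ext X Y n) := by
  let P := projectiveResolution X
  let K := P.complex.linearYonedaObj R Y
  have hnext : n + 1 = (ComplexShape.up ℕ).next n := by simp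
  let Φ : LinearMap.ker (K.sc n).g.hom →ₗ[R] Abelian.Ext X Y n :=
    { toFun f := P.extMk f.1 _ hnext f.2
      map_add' f g := (P.add_extMk _ _ _ _ f.2 g.2).symm
      map_smul' r f := (smul_extMk P f.1 _ hnext f.2 r).symm }
  have hΦ : Function.Surjective Φ := fun α => by
    obtain ⟨f, hf, rfl⟩ := P.extMk_surjective α _ hnext
    exact ⟨⟨f, hf⟩, rfl⟩
  have hker : LinearMap.ker Φ = LinearMap.range (K.sc n).moduleCatToCycles := by
    ext f
    refine (extMk_eq_zero_iff_mem_range (R := R) P f.1 _ hnext f.2).trans ?_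
    exact
      ⟨fun ⟨g, hg⟩ => ⟨g, Subtype.ext hg⟩, fun ⟨g, hg⟩ => ⟨g, congrArg Subtype.val hg⟩⟩
  obtain ⟨e⟩ := nonempty_homology_linearEquiv (K.sc n) Φ hΦ hker
  exact ⟨(P.isoExt n Y).toLinearEquiv ≪≫ₗ e⟩

end ExtComparison

section Length

variable {R M₁ M₂ M₃ M₄ : Type*} [Ring R] [AddCommGroup M₁] [Module R M₁] [AddCommGroup M₂]
  [Module R M₂] [AddCommGroup M₃] [Module R M₃] [AddCommGroup M₄] [Module R M₄]

lemma length_add_length_of_exact_of_exact {f : M₁ →ₗ[R] M₂} {g : M₂ →ₗ[R] M₃} {h : M₃ →ₗ[R] M₄}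
    (hf : Function.Injective f) (hfg : Function.Exact f g) (hgh : Function.Exact g h)
    (hh : Function.Surjective h) :
    Module.length R M₂ + Module.length R M₄ = Module.length R M₁ + Module.length R M₃ := by
  have hfg' : Function.Exact f g.rangeRestrict := fun x => by
    rw [← hfg x, Subtype.ext_iff]; rfl
  have hgh' : Function.Exact (LinearMap.range g).subtype h := fun x => by
    rw [hgh x]; simp
  rw [Module.length_eq_add_of_exact f g.rangeRestrict hf g.surjective_rangeRestrict hfg',
    Module.length_eq_add_of_exact (LinearMap.range g).subtype h (Submodule.subtype_injective _) hh
      hgh', add_assoc]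

end Length

section ExtFirstVariable

variable {C : Type*} [Category.{v} C] [Abelian C] [HasExt.{w} C]

lemma subsingleton_ext_of_retract {X X' : C} (h : Retract X X') (Y : C) (n : ℕ)
    [Subsingleton (Abelian.Ext X' Y n)] : Subsingleton (Abelian.Ext X Y n) := by
  refine subsingleton_of_forall_eq 0 fun x => ?_
  rw [← Abelian.Ext.mk₀_id_comp x, ← h.retract, ← Abelian.Ext.mk₀_comp_mk₀_assoc,
    Subsingleton.elim ((Abelian.Ext.mk₀ h.r).comp x _) 0, Abelian.Ext.comp_zero]

lemma subsingleton_ext_of_shortExact {S : ShortComplex C} (hS : S.ShortExact) (Y : C) (n : ℕ)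
    [Subsingleton (Abelian.Ext S.X₁ Y n)] [Subsingleton (Abelian.Ext S.X₃ Y n)] :
    Subsingleton (Abelian.Ext S.X₂ Y n) := by
  refine subsingleton_of_forall_eq 0 fun x => ?_
  obtain ⟨y, rfl⟩ := Abelian.Ext.contravariant_sequence_exact₂ hS Y x (Subsingleton.elim _ _)
  rw [Subsingleton.elim y 0, Abelian.Ext.comp_zero]

lemma exists_comp_eq_of_subsingleton_ext_one {S : ShortComplex C} (hS : S.ShortExact) {Y : C}
    [Subsingleton (Abelian.Ext S.X₃ Y 1)] (φ : S.X₁ ⟶ Y) : ∃ ψ : S.X₂ ⟶ Y, S.f ≫ ψ = φ := by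
  obtain ⟨x, hx⟩ := Abelian.Ext.contravariant_sequence_exact₁ hS Y (Abelian.Ext.mk₀ φ)
    (add_zero 1) (Subsingleton.elim _ _)
  obtain ⟨ψ, rfl⟩ := (Abelian.Ext.mk₀_bijective _ _).2 x
  rw [Abelian.Ext.mk₀_comp_mk₀] at hx
  exact ⟨ψ, (Abelian.Ext.mk₀_bijective _ _).1 hx⟩

variable {R : Type*} [CommRing R] [Linear R C]

lemma exact_precomp_mk₀_precomp_mk₀ {S : ShortComplex C} (hS : S.ShortExact) (Y : C) (n : ℕ) :
    Function.Exact ((Abelian.Ext.mk₀ S.g).precompOfLinear R Y (zero_add n))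
      ((Abelian.Ext.mk₀ S.f).precompOfLinear R Y (zero_add n)) :=
  (ShortComplex.ab_exact_iff_function_exact _).1
    (Abelian.Ext.contravariant_sequence_exact₂' hS Y n)

lemma exact_precomp_mk₀_precomp_extClass {S : ShortComplex C} (hS : S.ShortExact) (Y : C)
    (n : ℕ) :
    Function.Exact ((Abelian.Ext.mk₀ S.f).precompOfLinear R Y (zero_add n))
      (hS.extClass.precompOfLinear R Y (add_comm 1 n)) :=
  (ShortComplex.ab_exact_iff_function_exact _).1
    (Abelian.Ext.contravariant_sequence_exact₁' hS Y n (n + 1) (add_comm 1 n))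

lemma exact_precomp_extClass_precomp_mk₀ {S : ShortComplex C} (hS : S.ShortExact) (Y : C)
    (n : ℕ) :
    Function.Exact (hS.extClass.precompOfLinear R Y (add_comm 1 n))
      ((Abelian.Ext.mk₀ S.g).precompOfLinear R Y (zero_add (n + 1))) :=
  (ShortComplex.ab_exact_iff_function_exact _).1
    (Abelian.Ext.contravariant_sequence_exact₃' hS Y n (n + 1) (add_comm 1 n))

variable (R)

lemma length_ext_succ_of_shortExact {S : ShortComplex C} (hS : S.ShortExact) (Y : C) (n : ℕ)
    [Subsingleton (Abelian.Ext S.X₂ Y n)] [Subsingleton (Abelian.Ext S.X₂ Y (n + 1))] :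
    Module.length R (Abelian.Ext S.X₃ Y (n + 1)) = Module.length R (Abelian.Ext S.X₁ Y n) := by
  refine (LinearEquiv.ofBijective (hS.extClass.precompOfLinear R Y (add_comm 1 n))
    ⟨?_, ?_⟩).length_eq.symm
  · rw [injective_iff_map_eq_zero]
    intro x hx
    obtain ⟨y, rfl⟩ := (exact_precomp_mk₀_precomp_extClass hS Y n x).1 hx
    rw [Subsingleton.elim y 0, map_zero]
  · exact fun x => (exact_precomp_extClass_precomp_mk₀ hS Y n x).1 (Subsingleton.elim _ _)

lemma length_ext_zero_add_length_ext_one_of_shortExact {S : ShortComplex C} (hS : S.ShortExact)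
    (Y : C) [Subsingleton (Abelian.Ext S.X₂ Y 1)] :
    Module.length R (Abelian.Ext S.X₂ Y 0) + Module.length R (Abelian.Ext S.X₃ Y 1) =
      Module.length R (Abelian.Ext S.X₃ Y 0) + Module.length R (Abelian.Ext S.X₁ Y 0) := by
  have := hS.epi_g
  exact length_add_length_of_exact_of_exact (Abelian.Ext.precomp_mk₀_injective_of_epi Y S.g)
    (exact_precomp_mk₀_precomp_mk₀ (R := R) hS Y 0) (exact_precomp_mk₀_precomp_extClass hS Y 0)
    fun x => (exact_precomp_extClass_precomp_mk₀ hS Y 0 x).1 (Subsingleton.elim _ _)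

lemma length_ext_of_isBilimit {J : Type*} [Fintype J] {X : C} {b : Limits.Bicone fun _ : J => X}
    (hb : b.IsBilimit) (Y : C) (n : ℕ) :
    Module.length R (Abelian.Ext b.pt Y n) =
      Fintype.card J * Module.length R (Abelian.Ext X Y n) := by
  let e : Abelian.Ext b.pt Y n ≃ₗ[R] (J → Abelian.Ext X Y n) :=
    { Abelian.Ext.biproductAddEquiv hb Y n with
      map_smul' r x := funext fun j => Abelian.Ext.comp_smul _ _ (zero_add n) r }
  rw [e.length_eq, Module.length_pi_of_fintype, Finset.sum_const, Finset.card_univ, nsmul_eq_mul]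

end ExtFirstVariable

section ModuleExt

variable {R : Type u} [CommRing R] {M N : Type u} [AddCommGroup M] [Module R M]
  [AddCommGroup N] [Module R N]

lemma subsingleton_ext_of_comp_eq_id {f : M →ₗ[R] N} {g : N →ₗ[R] M}
    (h : g ∘ₗ f = LinearMap.id) (Y : ModuleCat.{u} R) (n : ℕ)
    [Subsingleton (Abelian.Ext (ModuleCat.of R N) Y n)] :
    Subsingleton (Abelian.Ext (ModuleCat.of R M) Y n) :=
  subsingleton_ext_of_retract ⟨ModuleCat.ofHom f, ModuleCat.ofHom g, ModuleCat.hom_ext h⟩ Y n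

lemma shortExact_subtype_mkQ (W : Submodule R M) :
    (ModuleCat.shortComplexOfCompEqZero W.subtype W.mkQ
      (LinearMap.exact_subtype_mkQ W).linearMap_comp_eq_zero).ShortExact :=
  ModuleCat.shortComplex_shortExact _ (LinearMap.exact_subtype_mkQ W) W.subtype_injective
    W.mkQ_surjective

lemma length_ext_of_linearEquiv_pi {ι : Type*} [Fintype ι] (e : M ≃ₗ[R] (ι → N))
    (Y : ModuleCat.{u} R) (n : ℕ) :
    Module.length R (Abelian.Ext (ModuleCat.of R M) Y n) =
      Fintype.card ι * Module.length R (Abelian.Ext (ModuleCat.of R N) Y n) := by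
  classical
  let b : Limits.Bicone fun _ : ι => ModuleCat.of R N :=
    { pt := ModuleCat.of R M
      π j := ModuleCat.ofHom (LinearMap.proj j ∘ₗ e.toLinearMap)
      ι j := ModuleCat.ofHom (e.symm.toLinearMap ∘ₗ LinearMap.single R (fun _ => N) j)
      ι_π i j := by
        ext x
        by_cases h : i = j
        · subst h
          simp
        · simp [h] }
  have hb : b.IsBilimit := Limits.isBilimitOfTotal b <| by
    ext x
    apply e.injective
    simp [b, ModuleCat.hom_sum, ← map_sum, LinearMap.sum_apply, Finset.univ_sum_single]
  exact length_ext_of_isBilimit R hb Y n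

lemma length_ext_zero (M N : Type u) [AddCommGroup M] [Module R M] [AddCommGroup N] [Module R N] :
    Module.length R (Abelian.Ext (ModuleCat.of R M) (ModuleCat.of R N) 0) =
      Module.length R (M →ₗ[R] N) :=
  ((Abelian.Ext.linearEquiv₀ (R := R)).trans ModuleCat.homLinearEquiv).length_eq

lemma module_injective_of_subsingleton_ext_one
    (h : ∀ I : Ideal R, Subsingleton (Abelian.Ext (ModuleCat.of R (R ⧸ I)) (ModuleCat.of R N) 1)) :
    Module.Injective R N := by
  refine Module.Baer.injective (Module.Baer.iff_surjective.2 fun I φ => ?_)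
  have := h I
  obtain ⟨ψ, hψ⟩ := exists_comp_eq_of_subsingleton_ext_one (shortExact_subtype_mkQ I)
    (ModuleCat.ofHom φ)
  exact ⟨ψ.hom, congrArg ModuleCat.Hom.hom hψ⟩

end ModuleExt

section MaximalIdeal

variable {R : Type u} [CommRing R] (I : Ideal R) [I.IsMaximal]

lemma exists_linearEquiv_pi_quotient_of_isTorsionBySet {V : Type*} [AddCommGroup V] [Module R V]
    [Module.Finite R V] (hV : Module.IsTorsionBySet R V I) :
    ∃ n : ℕ, Nonempty (V ≃ₗ[R] (Fin n → R ⧸ I)) := by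
  let := hV.module
  let := Ideal.Quotient.field I
  have := hV.isScalarTower (S := R)
  have := Module.Finite.of_restrictScalars_finite R (R ⧸ I) V
  exact ⟨_, ⟨(Module.finBasis (R ⧸ I) V).equivFun.restrictScalars R⟩⟩

lemma length_quotient_of_isMaximal : Module.length R (R ⧸ I) = 1 :=
  Module.length_eq_one_iff.2 (isSimpleModule_iff_isCoatom.2 (Ideal.isMaximal_def.1 inferInstance))

lemma length_ext_of_isTorsionBySet {V : Type u} [AddCommGroup V] [Module R V] [Module.Finite R V]
    (hV : Module.IsTorsionBySet R V I) (Y : ModuleCat.{u} R) (n : ℕ) :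
    Module.length R (Abelian.Ext (ModuleCat.of R V) Y n) =
      Module.length R V * Module.length R (Abelian.Ext (ModuleCat.of R (R ⧸ I)) Y n) := by
  obtain ⟨m, ⟨e⟩⟩ := exists_linearEquiv_pi_quotient_of_isTorsionBySet I hV
  rw [length_ext_of_linearEquiv_pi e, e.length_eq, Module.length_pi, length_quotient_of_isMaximal,
    mul_one]
  simp

lemma exists_comp_eq_id_of_notMem_smul_top {N : Type*} [AddCommGroup N] [Module R N] {x : N}
    (hx : ∀ r ∈ I, r • x = 0) (hxI : x ∉ I • (⊤ : Submodule R N)) :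
    ∃ (f : R ⧸ I →ₗ[R] N) (g : N →ₗ[R] R ⧸ I), g ∘ₗ f = LinearMap.id := by
  let := Ideal.Quotient.field I
  have hx' : (I • (⊤ : Submodule R N)).mkQ x ≠ 0 := by
    rwa [Ne, Submodule.mkQ_apply, Submodule.Quotient.mk_eq_zero]
  obtain ⟨φ, hφ⟩ := Module.Projective.exists_dual_eq_one (R ⧸ I) hx'
  refine ⟨I.liftQ (LinearMap.toSpanSingleton R N x) hx,
    (φ.restrictScalars R) ∘ₗ (I • (⊤ : Submodule R N)).mkQ, ?_⟩
  refine Submodule.linearMap_qext _ (LinearMap.ext_ring ?_)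
  change φ ((I • (⊤ : Submodule R N)).mkQ ((1 : R) • x)) = 1
  rwa [one_smul]

end MaximalIdeal

section ArtinianLocal

open IsLocalRing

variable {R : Type u} [CommRing R] [IsArtinianRing R] [IsLocalRing R]

lemma subsingleton_ext_of_subsingleton_ext_quotient_maximalIdeal (Y : ModuleCat.{u} R) (n : ℕ)
    [hk : Subsingleton (Abelian.Ext (ModuleCat.of R (R ⧸ maximalIdeal R)) Y n)] (M : Type u)
    [AddCommGroup M] [Module R M] [hM : Module.Finite R M] :
    Subsingleton (Abelian.Ext (ModuleCat.of R M) Y n) := by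
  refine IsNoetherianRing.induction_on_isQuotientEquivQuotientPrime R hM
    (motive := fun N _ _ _ => Subsingleton (Abelian.Ext (ModuleCat.of R N) Y n)) ?_ ?_ ?_
  · intro N _ _ _ _
    exact subsingleton_ext_of_comp_eq_id (f := (0 : N →ₗ[R] R ⧸ maximalIdeal R)) (g := 0)
      (LinearMap.ext fun x => Subsingleton.elim _ _) Y n
  · intro N _ _ _ p e
    rw [eq_maximalIdeal (IsArtinianRing.isMaximal_of_isPrime p.1)] at e
    exact subsingleton_ext_of_comp_eq_id e.symm_comp Y n
  · intro N₁ _ _ _ N₂ _ _ _ N₃ _ _ _ f g hf hg hfg h₁ h₃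
    exact subsingleton_ext_of_shortExact
      (S := ModuleCat.shortComplexOfCompEqZero f g hfg.linearMap_comp_eq_zero)
      (ModuleCat.shortComplex_shortExact _ hfg hf hg) Y n

lemma module_injective_of_subsingleton_ext_one_quotient_maximalIdeal (N : Type u) [AddCommGroup N]
    [Module R N]
    [Subsingleton (Abelian.Ext (ModuleCat.of R (R ⧸ maximalIdeal R)) (ModuleCat.of R N) 1)] :
    Module.Injective R N :=
  module_injective_of_subsingleton_ext_one fun I =>
    subsingleton_ext_of_subsingleton_ext_quotient_maximalIdeal _ 1 (R ⧸ I)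

end ArtinianLocal

section Torsion

variable {R : Type*} [CommRing R] {N : Type*} [AddCommGroup N] [Module R N]

lemma torsionBySet_dual_eq_dualAnnihilator (I : Ideal R) :
    Submodule.torsionBySet R (Module.Dual R N) I =
      (I • (⊤ : Submodule R N)).dualAnnihilator := by
  ext φ
  rw [Submodule.mem_torsionBySet_iff, Submodule.mem_dualAnnihilator]
  refine ⟨fun h x hx => ?_, fun h r => LinearMap.ext fun x => ?_⟩
  · have : I • (⊤ : Submodule R N) ≤ LinearMap.ker φ :=
      Submodule.smul_le.2 fun r hr y _ => (map_smul φ r y).trans (LinearMap.congr_fun (h ⟨r, hr⟩) y)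
    exact this hx
  · rw [LinearMap.smul_apply, ← map_smul]
    exact h _ (Submodule.smul_mem_smul r.2 trivial)

lemma annihilator_le_annihilator_dual :
    Module.annihilator R N ≤ Module.annihilator R (Module.Dual R N) := fun r hr =>
  Module.mem_annihilator.2 fun φ => LinearMap.ext fun x => by
    rw [LinearMap.smul_apply, ← map_smul, Module.mem_annihilator.1 hr, map_zero,
      LinearMap.zero_apply]

lemma smul_top_le_torsionBySet {I : Ideal R} (hI : I ^ 3 = ⊥)
    (hN : I.annihilator ≤ Module.annihilator R N) :
    I • (⊤ : Submodule R N) ≤ Submodule.torsionBySet R N I := by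
  refine Submodule.smul_le.2 fun s hs x _ => (Submodule.mem_torsionBySet_iff _ _).2 fun r => ?_
  rw [smul_smul]
  refine Module.mem_annihilator.1 (hN (Submodule.mem_annihilator.2 fun t ht => ?_)) x
  have : (r : R) * s * t ∈ I ^ 3 := by
    rw [pow_three']
    exact Ideal.mul_mem_mul (Ideal.mul_mem_mul r.2 hs) ht
  rwa [hI] at this

end Torsion

section SocleLength

open IsLocalRing

variable {R : Type u} [CommRing R] {N : Type u} [AddCommGroup N] [Module R N]

lemma length_torsionBySet_dual (I : Ideal R) [I.IsMaximal] [Module.Finite R N] :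
    Module.length R (Submodule.torsionBySet R (Module.Dual R N) I) =
      Module.length R (N ⧸ I • (⊤ : Submodule R N)) *
        Module.length R (Abelian.Ext (ModuleCat.of R (R ⧸ I)) (ModuleCat.of R R) 0) := by
  rw [torsionBySet_dual_eq_dualAnnihilator, ← (Submodule.dualQuotEquivDualAnnihilator _).length_eq,
    ← length_ext_of_isTorsionBySet I (Module.isTorsionBySet_quotient_ideal_smul N I),
    length_ext_zero]

variable [IsArtinianRing R] [IsLocalRing R]

lemma torsionBySet_maximalIdeal_le_smul_top {Y : Type u} [AddCommGroup Y] [Module R Y]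
    (hY : ¬ Module.Injective R Y)
    [Subsingleton (Abelian.Ext (ModuleCat.of R N) (ModuleCat.of R Y) 1)] :
    Submodule.torsionBySet R N (maximalIdeal R) ≤ maximalIdeal R • (⊤ : Submodule R N) := by
  intro x hx
  by_contra hxm
  obtain ⟨f, g, hgf⟩ := exists_comp_eq_id_of_notMem_smul_top (maximalIdeal R)
    (fun r hr => (Submodule.mem_torsionBySet_iff _ _).1 hx ⟨r, hr⟩) hxm
  have := subsingleton_ext_of_comp_eq_id hgf (ModuleCat.of R Y) 1
  exact hY (module_injective_of_subsingleton_ext_one_quotient_maximalIdeal Y)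

end SocleLength

section TotallyReflexive

open IsLocalRing

/-- Modules of G-dimension zero, with the vanishing conditions stated for the derived-category
groups `Abelian.Ext` rather than for the derived functor `Ext`. -/
structure TotallyReflexive (R : Type u) [CommRing R] (N : Type u) [AddCommGroup N] [Module R N] :
    Prop where
  isReflexive : Module.IsReflexive R N
  subsingleton_ext : ∀ i : ℕ, 0 < i →
    Subsingleton (Abelian.Ext (ModuleCat.of R N) (ModuleCat.of R R) i)
  subsingleton_ext_dual : ∀ i : ℕ, 0 < i →
    Subsingleton (Abelian.Ext (ModuleCat.of R (Module.Dual R N)) (ModuleCat.of R R) i)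

namespace TotallyReflexive

variable {R : Type u} [CommRing R] {M N : Type u} [AddCommGroup M] [Module R M] [AddCommGroup N]
  [Module R N]

lemma of_comp_eq_id (hM : TotallyReflexive R M) {f : N →ₗ[R] M} {g : M →ₗ[R] N}
    (hgf : g ∘ₗ f = LinearMap.id) : TotallyReflexive R N where
  isReflexive := have := hM.isReflexive; .of_split f g hgf
  subsingleton_ext i hi := have := hM.subsingleton_ext i hi; subsingleton_ext_of_comp_eq_id hgf _ i
  subsingleton_ext_dual i hi :=
    have := hM.subsingleton_ext_dual i hi
    subsingleton_ext_of_comp_eq_id (f := g.dualMap) (g := f.dualMap)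
      (congrArg LinearMap.dualMap hgf) _ i

lemma dual (hN : TotallyReflexive R N) : TotallyReflexive R (Module.Dual R N) :=
  have := hN.isReflexive
  { isReflexive := inferInstance
    subsingleton_ext := hN.subsingleton_ext_dual
    subsingleton_ext_dual i hi :=
      have := hN.subsingleton_ext i hi
      subsingleton_ext_of_comp_eq_id (Module.evalEquiv R N).comp_symm _ i }

end TotallyReflexive

section FreeSummand

variable {R M : Type*} [CommRing R] [AddCommGroup M] [Module R M]

lemma exists_dual_apply_eq_one [IsLocalRing R]
    (heval : Function.Injective (Module.Dual.eval R M))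
    (h : ¬ (maximalIdeal R).annihilator ≤ Module.annihilator R M) :
    ∃ (f : Module.Dual R M) (x : M), f x = 1 := by
  obtain ⟨s, hs, hsM⟩ := SetLike.not_le_iff_exists.1 h
  obtain ⟨x, hx⟩ : ∃ x : M, s • x ≠ 0 := by
    simpa only [Module.mem_annihilator, not_forall] using hsM
  obtain ⟨f, hf⟩ : ∃ f : Module.Dual R M, f (s • x) ≠ 0 := by
    contrapose! hx
    exact heval (LinearMap.ext fun f => by simpa using hx f)
  have hfx : IsUnit (f x) := by
    contrapose! hf
    rw [map_smul]
    exact Submodule.mem_annihilator.1 hs _ hf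
  exact ⟨hfx.unit⁻¹ • f, x, by simp [Units.smul_def]⟩

lemma exists_linearEquiv_ker_prod_of_dual_apply_eq_one {f : Module.Dual R M} {x : M}
    (hfx : f x = 1) :
    ∃ e : M ≃ₗ[R] LinearMap.ker f × R,
      (LinearMap.ker f).subtype = e.symm.toLinearMap ∘ₗ LinearMap.inl R _ R :=
  ⟨_, (f.exact_subtype_ker_map.splitSurjectiveEquiv (LinearMap.ker f).subtype_injective
    ⟨LinearMap.toSpanSingleton R M x, LinearMap.ext_ring (by simpa using hfx)⟩).2.1⟩

end FreeSummand

variable {R : Type u} [CommRing R] [IsArtinianRing R] [IsLocalRing R]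

theorem TotallyReflexive.exists_annihilator_maximalIdeal_le (M : Type u) [AddCommGroup M]
    [Module R M] [Module.Finite R M] (hM : TotallyReflexive R M) (hfree : ¬ Module.Free R M) :
    ∃ N : ModuleCat.{u} R, Module.Finite R N ∧ TotallyReflexive R N ∧ ¬ Module.Free R N ∧
      (maximalIdeal R).annihilator ≤ Module.annihilator R N := by
  by_cases hann : (maximalIdeal R).annihilator ≤ Module.annihilator R M
  · exact ⟨ModuleCat.of R M, ‹_›, hM, hfree, hann⟩
  obtain ⟨f, x, hfx⟩ := exists_dual_apply_eq_one
    hM.isReflexive.bijective_dual_eval'.1 hann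
  obtain ⟨e, he⟩ := exists_linearEquiv_ker_prod_of_dual_apply_eq_one hfx
  have hK : TotallyReflexive R (LinearMap.ker f) :=
    hM.of_comp_eq_id (f := (LinearMap.ker f).subtype) (g := LinearMap.fst R _ R ∘ₗ e.toLinearMap)
      (by rw [he]; ext; simp)
  have hKfree : ¬ Module.Free R (LinearMap.ker f) := fun _ => hfree (.of_equiv e.symm)
  exact exists_annihilator_maximalIdeal_le (LinearMap.ker f) hK hKfree
termination_by Module.length R M
decreasing_by
  exact Submodule.length_lt fun htop => one_ne_zero (hfx.symm.trans (LinearMap.mem_ker.1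
    (htop ▸ Submodule.mem_top)))

end TotallyReflexive

section BassNumber

open IsLocalRing

/-- The `i`-th Bass number of the module `Y`, i.e. the dimension of `Ext^i(k, Y)` over the residue
field `k`, encoded as a length over `R`. -/
noncomputable def bassNumber (R : Type u) [CommRing R] [IsLocalRing R] (Y : Type u)
    [AddCommGroup Y] [Module R Y] (i : ℕ) : ℕ∞ :=
  Module.length R (Abelian.Ext (ModuleCat.of R (R ⧸ maximalIdeal R)) (ModuleCat.of R Y) i)

variable {R : Type u} [CommRing R] [IsLocalRing R] {N Y : Type u} [AddCommGroup N] [Module R N]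
  [AddCommGroup Y] [Module R Y]

lemma bassNumber_ne_top [IsArtinianRing R] [Module.Finite R Y] (i : ℕ) : bassNumber R Y i ≠ ⊤ := by
  have := ModuleCat.finite_ext R (ModuleCat.of R (R ⧸ maximalIdeal R)) (ModuleCat.of R Y) i
  exact Module.length_ne_top

lemma bassNumber_one_ne_zero [IsArtinianRing R] (hY : ¬ Module.Injective R Y) :
    bassNumber R Y 1 ≠ 0 := fun h =>
  have := Module.length_eq_zero_iff.1 h
  hY (module_injective_of_subsingleton_ext_one_quotient_maximalIdeal Y)

lemma length_quotient_smul_top_ne_zero [Module.Finite R N] [Nontrivial N] :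
    Module.length R (N ⧸ maximalIdeal R • (⊤ : Submodule R N)) ≠ 0 := fun h => by
  rw [Module.length_eq_zero_iff, Submodule.Quotient.subsingleton_iff] at h
  exact top_ne_bot (Submodule.eq_bot_of_le_smul_of_le_jacobson_bot (maximalIdeal R) ⊤
    Module.Finite.fg_top h.ge (maximalIdeal_le_jacobson _))

lemma length_ext_quotient_smul_top [Module.Finite R N] (i : ℕ) :
    Module.length R (Abelian.Ext (ModuleCat.of R (N ⧸ maximalIdeal R • (⊤ : Submodule R N)))
      (ModuleCat.of R Y) i) =
      Module.length R (N ⧸ maximalIdeal R • (⊤ : Submodule R N)) * bassNumber R Y i :=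
  length_ext_of_isTorsionBySet (maximalIdeal R)
    (Module.isTorsionBySet_quotient_ideal_smul N (maximalIdeal R)) _ i

variable [IsNoetherianRing R] [Module.Finite R N]

lemma length_ext_smul_top
    (hN : maximalIdeal R • ⊤ ≤ Submodule.torsionBySet R N (maximalIdeal R)) (i : ℕ) :
    Module.length R (Abelian.Ext (ModuleCat.of R ↥(maximalIdeal R • (⊤ : Submodule R N)))
      (ModuleCat.of R Y) i) =
      Module.length R ↥(maximalIdeal R • (⊤ : Submodule R N)) * bassNumber R Y i :=
  length_ext_of_isTorsionBySet (maximalIdeal R)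
    (fun x r => Subtype.ext ((Submodule.mem_torsionBySet_iff _ _).1 (hN x.2) r)) _ i

lemma length_quotient_mul_bassNumber_succ
    (hN : maximalIdeal R • ⊤ ≤ Submodule.torsionBySet R N (maximalIdeal R))
    (hext : ∀ i : ℕ, 0 < i → Subsingleton (Abelian.Ext (ModuleCat.of R N) (ModuleCat.of R Y) i))
    {i : ℕ} (hi : 0 < i) :
    Module.length R (N ⧸ maximalIdeal R • (⊤ : Submodule R N)) * bassNumber R Y (i + 1) =
      Module.length R ↥(maximalIdeal R • (⊤ : Submodule R N)) * bassNumber R Y i := by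
  have := hext i hi
  have := hext (i + 1) i.succ_pos
  rw [← length_ext_quotient_smul_top, ← length_ext_smul_top hN]
  exact length_ext_succ_of_shortExact R (shortExact_subtype_mkQ _) _ i

lemma length_linearMap_add_length_quotient_mul_bassNumber_one
    (hN : maximalIdeal R • ⊤ ≤ Submodule.torsionBySet R N (maximalIdeal R))
    [Subsingleton (Abelian.Ext (ModuleCat.of R N) (ModuleCat.of R Y) 1)] :
    Module.length R (N →ₗ[R] Y) +
        Module.length R (N ⧸ maximalIdeal R • (⊤ : Submodule R N)) * bassNumber R Y 1 =
      Module.length R (N ⧸ maximalIdeal R • (⊤ : Submodule R N)) * bassNumber R Y 0 +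
        Module.length R ↥(maximalIdeal R • (⊤ : Submodule R N)) * bassNumber R Y 0 := by
  rw [← length_ext_zero, ← length_ext_quotient_smul_top, ← length_ext_quotient_smul_top,
    ← length_ext_smul_top hN]
  exact length_ext_zero_add_length_ext_one_of_shortExact R (shortExact_subtype_mkQ _) _

end BassNumber

section Duality

open IsLocalRing

variable {R : Type u} [CommRing R]

lemma length_smul_top_of_linearEquiv {M N : Type*} [AddCommGroup M] [Module R M] [AddCommGroup N]
    [Module R N] (e : M ≃ₗ[R] N) (I : Ideal R) :
    Module.length R ↥(I • (⊤ : Submodule R M)) = Module.length R ↥(I • (⊤ : Submodule R N)) := by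
  have hmap : (I • (⊤ : Submodule R M)).map e.toLinearMap = I • ⊤ := by
    rw [Submodule.map_smul'', Submodule.map_top, e.range]
  rw [← hmap]
  exact (e.submoduleMap _).length_eq

variable [IsArtinianRing R] [IsLocalRing R] {N : Type u} [AddCommGroup N] [Module R N]

lemma length_smul_top_dual [Module.Finite R N] (hR : ¬ Module.Injective R R)
    (hN : maximalIdeal R • ⊤ ≤ Submodule.torsionBySet R (Module.Dual R N) (maximalIdeal R))
    [Subsingleton (Abelian.Ext (ModuleCat.of R (Module.Dual R N)) (ModuleCat.of R R) 1)] :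
    Module.length R ↥(maximalIdeal R • (⊤ : Submodule R (Module.Dual R N))) =
      Module.length R (N ⧸ maximalIdeal R • (⊤ : Submodule R N)) * bassNumber R R 0 := by
  rw [hN.antisymm (torsionBySet_maximalIdeal_le_smul_top hR), length_torsionBySet_dual]
  rfl

end Duality

section Arithmetic

lemma eq_of_mul_eq_mul_of_mul_eq_mul {a b c d : ℕ∞} (ha : a ≠ ⊤) (hb : b ≠ ⊤) (hc : c ≠ 0)
    (hc' : c ≠ ⊤) (h₁ : a * c = b * d) (h₂ : b * c = a * d) : a = b := by
  have h : a * a * c = b * b * c :=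
    calc a * a * c = a * (a * c) := by ring
      _ = b * (a * d) := by rw [h₁]; ring
      _ = b * b * c := by rw [← h₂]; ring
  have hsq : a * a = b * b := (ENat.mul_left_strictMono hc hc').injective h
  lift a to ℕ using ha
  lift b to ℕ using hb
  exact congrArg _ (Nat.mul_self_inj.1 (mod_cast hsq))

lemma eq_pow_sub_pow_of_succ_eq_mul {r : ℕ} {μ : ℕ → ℕ} (h₁ : μ 1 + 1 = r ^ 2)
    (hsucc : ∀ i, 0 < i → μ (i + 1) = r * μ i) {i : ℕ} (hi : 1 ≤ i) :
    μ i = r ^ (i + 1) - r ^ (i - 1) := by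
  induction i, hi using Nat.le_induction with
  | base => simp [← h₁]
  | succ i hi ih =>
    rw [hsucc i hi, ih, Nat.mul_sub, ← pow_succ', ← pow_succ', Nat.sub_add_cancel hi,
      Nat.add_sub_cancel]

end Arithmetic

namespace TotallyReflexive

open IsLocalRing

variable {R : Type u} [CommRing R] [IsArtinianRing R] [IsLocalRing R] {N : Type u} [AddCommGroup N]
  [Module R N] [Module.Finite R N]

section

variable (hR : ¬ Module.Injective R R) (hm : maximalIdeal R ^ 3 = ⊥) (hN : TotallyReflexive R N)
  (hann : (maximalIdeal R).annihilator ≤ Module.annihilator R N)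
include hR hm hN hann

lemma length_smul_top_dual_eq :
    Module.length R ↥(maximalIdeal R • (⊤ : Submodule R (Module.Dual R N))) =
      Module.length R (N ⧸ maximalIdeal R • (⊤ : Submodule R N)) * bassNumber R R 0 :=
  have := hN.subsingleton_ext_dual 1 one_pos
  length_smul_top_dual hR (smul_top_le_torsionBySet hm (hann.trans annihilator_le_annihilator_dual))

lemma length_smul_top_eq :
    Module.length R ↥(maximalIdeal R • (⊤ : Submodule R N)) =
      Module.length R (Module.Dual R N ⧸ maximalIdeal R • (⊤ : Submodule R (Module.Dual R N))) *
        bassNumber R R 0 := by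
  have := hN.isReflexive
  rw [length_smul_top_of_linearEquiv (Module.evalEquiv R N)]
  exact hN.dual.length_smul_top_dual_eq hR hm (hann.trans annihilator_le_annihilator_dual)

variable [Nontrivial N]

lemma bassNumber_zero_ne_zero : bassNumber R R 0 ≠ 0 := fun h => by
  have := hN.subsingleton_ext 1 one_pos
  have h₁ := length_linearMap_add_length_quotient_mul_bassNumber_one (Y := R)
    (smul_top_le_torsionBySet hm hann)
  rw [h, mul_zero, mul_zero, add_zero, add_eq_zero, mul_eq_zero] at h₁
  exact h₁.2.elim length_quotient_smul_top_ne_zero (bassNumber_one_ne_zero hR)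

lemma length_quotient_smul_top_dual_eq :
    Module.length R (Module.Dual R N ⧸ maximalIdeal R • (⊤ : Submodule R (Module.Dual R N))) =
      Module.length R (N ⧸ maximalIdeal R • (⊤ : Submodule R N)) := by
  have hG := hann.trans annihilator_le_annihilator_dual
  have h := length_quotient_mul_bassNumber_succ (smul_top_le_torsionBySet hm hann)
    hN.subsingleton_ext one_pos
  have hdual := length_quotient_mul_bassNumber_succ (smul_top_le_torsionBySet hm hG)
    hN.subsingleton_ext_dual one_pos
  rw [hN.length_smul_top_eq hR hm hann, mul_assoc] at h
  rw [hN.length_smul_top_dual_eq hR hm hann, mul_assoc] at hdual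
  exact eq_of_mul_eq_mul_of_mul_eq_mul Module.length_ne_top Module.length_ne_top
    (mul_ne_zero (hN.bassNumber_zero_ne_zero hR hm hann) (bassNumber_one_ne_zero hR))
    (WithTop.mul_ne_top (bassNumber_ne_top 0) (bassNumber_ne_top 1))
    h.symm hdual.symm

lemma bassNumber_succ {i : ℕ} (hi : 0 < i) :
    bassNumber R R (i + 1) = bassNumber R R 0 * bassNumber R R i := by
  have h := length_quotient_mul_bassNumber_succ (smul_top_le_torsionBySet hm hann)
    hN.subsingleton_ext hi
  rw [hN.length_smul_top_eq hR hm hann, hN.length_quotient_smul_top_dual_eq hR hm hann,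
    mul_assoc] at h
  exact (ENat.mul_right_strictMono length_quotient_smul_top_ne_zero
    Module.length_ne_top).injective h

lemma bassNumber_one_add_one : bassNumber R R 1 + 1 = bassNumber R R 0 ^ 2 := by
  have := hN.subsingleton_ext 1 one_pos
  set b := Module.length R (N ⧸ maximalIdeal R • (⊤ : Submodule R N)) with hb
  have hdual : Module.length R (Module.Dual R N) = b * bassNumber R R 0 + b := by
    rw [Module.length_eq_add_of_exact _ _ (Submodule.subtype_injective _)
      (Submodule.mkQ_surjective _) (LinearMap.exact_subtype_mkQ (maximalIdeal R • ⊤)),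
      hN.length_smul_top_dual_eq hR hm hann, hN.length_quotient_smul_top_dual_eq hR hm hann]
  have h := length_linearMap_add_length_quotient_mul_bassNumber_one (Y := R)
    (smul_top_le_torsionBySet hm hann)
  have hb0 : b ≠ 0 := length_quotient_smul_top_ne_zero
  have hbtop : b ≠ ⊤ := Module.length_ne_top
  rw [hN.length_smul_top_eq hR hm hann, hN.length_quotient_smul_top_dual_eq hR hm hann, ← hb,
    hdual, add_assoc] at h
  have hcancel : b + b * bassNumber R R 1 = b * bassNumber R R 0 * bassNumber R R 0 :=
    ENat.add_right_injective_of_ne_top (WithTop.mul_ne_top hbtop (bassNumber_ne_top 0)) h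
  refine (ENat.mul_right_strictMono hb0 hbtop).injective ?_
  rw [mul_add_one, add_comm, hcancel, sq, mul_assoc]

end

end TotallyReflexive

theorem stmt_6_general (R : Type u) [CommRing R] [IsNoetherianRing R] [IsLocalRing R]
    (hR : ¬ Module.Injective R R) (hm : IsLocalRing.maximalIdeal R ^ 3 = ⊥)
    (M : Type u) [AddCommGroup M] [Module R M] [Module.Finite R M] (hM : TotallyReflexive R M)
    (hfree : ¬ Module.Free R M) :
    ∃ r : ℕ, bassNumber R R 0 = r ∧
      ∀ i : ℕ, 1 ≤ i → bassNumber R R i = ((r ^ (i + 1) - r ^ (i - 1) : ℕ) : ℕ∞) := by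
  have : IsArtinianRing R := (isArtinianRing_iff_isNilpotent_maximalIdeal R).2 ⟨3, hm⟩
  obtain ⟨N, _, hN, hNfree, hann⟩ := hM.exists_annihilator_maximalIdeal_le M hfree
  have : Nontrivial N := not_subsingleton_iff_nontrivial.1 fun _ => hNfree inferInstance
  have hone := hN.bassNumber_one_add_one hR hm hann
  have hsucc := fun i (hi : 0 < i) => hN.bassNumber_succ hR hm hann hi
  choose μ hμ using fun i => ENat.ne_top_iff_exists.1 (bassNumber_ne_top (R := R) (Y := R) i)
  simp only [← hμ] at hone hsucc ⊢
  norm_cast at hone hsucc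
  exact ⟨μ 0, rfl, fun i hi => congrArg _ (eq_pow_sub_pow_of_succ_eq_mul hone hsucc hi)⟩

section Comparison

variable {R : Type} [CommRing R]

lemma subsingleton_extGrp_iff {M N : Type} [AddCommGroup M] [Module R M] [AddCommGroup N]
    [Module R N] {i : ℕ} :
    Subsingleton (ExtGrp R M N i) ↔
      Subsingleton (Abelian.Ext (ModuleCat.of R M) (ModuleCat.of R N) i) :=
  (nonempty_ext_linearEquiv _ _ i).elim fun e => e.toEquiv.subsingleton_congr

lemma GDimZero.totallyReflexive {M : Type} [AddCommGroup M] [Module R M] (hM : GDimZero R M) :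
    TotallyReflexive R M where
  isReflexive := ⟨hM.1⟩
  subsingleton_ext i hi := subsingleton_extGrp_iff.1 (hM.2.1 i hi)
  subsingleton_ext_dual i hi := subsingleton_extGrp_iff.1 (hM.2.2 i hi)

lemma hasFiniteSelfInjDim_of_injective (hR : Module.Injective R R) : HasFiniteSelfInjDim R := by
  have := Module.injective_object_of_injective_module R R
  refine ⟨0, fun N i hi => subsingleton_extGrp_iff.2 ?_⟩
  obtain ⟨i, rfl⟩ := Nat.exists_eq_add_one.2 hi
  exact Abelian.Ext.subsingleton_of_injective _ _ i

lemma isGorensteinLocalRing_of_injective [hN : IsNoetherianRing R] [hL : IsLocalRing R]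
    (hR : Module.Injective R R) : IsGorensteinLocalRing R :=
  ⟨hN, hL, hasFiniteSelfInjDim_of_injective hR⟩

variable [IsLocalRing R]

lemma mlength_extGrp_eq_bassNumber (Y : Type) [AddCommGroup Y] [Module R Y] (i : ℕ) :
    mlength R (ExtGrp R (R ⧸ IsLocalRing.maximalIdeal R) Y i) = bassNumber R Y i := by
  obtain ⟨e⟩ := nonempty_ext_linearEquiv (R := R)
    (ModuleCat.of R (R ⧸ IsLocalRing.maximalIdeal R)) (ModuleCat.of R Y) i
  rw [bassNumber, ← e.length_eq, Module.coe_length]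
  rfl

lemma typeLen_eq_bassNumber_zero : typeLen R = bassNumber R R 0 := by
  rw [bassNumber, length_ext_zero, Module.coe_length]
  rfl

end Comparison

/-- Bass numbers: μ⁰ = r and μⁱ = r^(i+1) - r^(i-1) for i ≥ 1,
where μⁱ = dim_k Ext^i(k,R) is expressed as a length over R. -/
theorem stmt_6 (R : Type) [CommRing R] [IsNoetherianRing R] [IsLocalRing R]
    (hng : ¬ IsGorensteinLocalRing R)
    (hm3 : (IsLocalRing.maximalIdeal R) ^ 3 = ⊥)
    (hm2 : (IsLocalRing.maximalIdeal R) ^ 2 ≠ ⊥)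
    (hex : ∃ M : ModuleCat R, Module.Finite R M ∧ GDimZero R M ∧ ¬ Module.Free R M) :
    ∃ r : ℕ, typeLen R = (r : ℕ∞) ∧
      mlength R (ExtGrp R (R ⧸ IsLocalRing.maximalIdeal R) R 0) = (r : ℕ∞) ∧
      ∀ i : ℕ, 1 ≤ i →
        mlength R (ExtGrp R (R ⧸ IsLocalRing.maximalIdeal R) R i) =
          ((r ^ (i + 1) - r ^ (i - 1) : ℕ) : ℕ∞) := by
  obtain ⟨M, _, hM, hfree⟩ := hex
  simpa only [typeLen_eq_bassNumber_zero, mlength_extGrp_eq_bassNumber, WithBot.coe_inj,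
    and_self_left] using stmt_6_general R (mt isGorensteinLocalRing_of_injective hng) hm3 M
      hM.totallyReflexive hfree
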